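/- Let d ≥ 1, let H : ℝ^d → ℝ be smooth, and let Q : ℝ^d → (d×d real matrices) be smooth with Q(z) skew-symmetric for every z. Define the vector field v : ℝ^d → ℝ^d by v_i(z) = -∑_{j=1}^d Q_{ij}(z) ∂H/∂z_j(z) + ∑_{j=1}^d ∂Q_{ij}/∂z_j(z). Then the density π(z) = e^{-H(z)} satisfies the stationary continuity (Liouville) equation for the flow of v: for every z ∈ ℝ^d, ∑_{i=1}^d ∂/∂z_i [ e^{-H(z)} v_i(z) ] = 0. -/

import Mathlib

open scoped BigOperators
open Matrix

/-- Classical partial derivative in the `i`-th coordinate direction. -/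
noncomputable def pd {ι : Type*} [Fintype ι] [DecidableEq ι]
    (i : ι) (f : (ι → ℝ) → ℝ) (z : ι → ℝ) : ℝ :=
  fderiv ℝ f z (Pi.single i 1)

theorem pd_comm_aux {d : ℕ} (f : (Fin d → ℝ) → ℝ) (hf : ContDiff ℝ (⊤ : ℕ∞) f)
    (i j : Fin d) (z : Fin d → ℝ) :
    pd i (fun w => pd j f w) z = pd j (fun w => pd i f w) z := by
  have hd : DifferentiableAt ℝ (fderiv ℝ f) z :=
    ((hf.fderiv_right (m := 1) (by norm_cast)).differentiable (by norm_num)) z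
  have hs : IsSymmSndFDerivAt ℝ f z := by
    apply hf.contDiffAt.isSymmSndFDerivAt
    simp only [minSmoothness_of_isRCLikeNormedField]
    norm_cast
  have key : ∀ a b : Fin d, pd a (fun w => pd b f w) z
      = fderiv ℝ (fderiv ℝ f) z (Pi.single a 1) (Pi.single b 1) := by
    intro a b
    unfold pd
    rw [fderiv_clm_apply hd (differentiableAt_const _)]
    simp
  rw [key, key]
  exact hs _ _

/-- The density `π = e^{-H}` satisfies the stationary continuity (Liouville)
equation for the irreversible vector field determined by a smooth skew-symmetric
matrix field `Q`. -/
theorem liouville_irreversible_flow {d : ℕ} (hd : 1 ≤ d)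
    (H : (Fin d → ℝ) → ℝ) (hH : ContDiff ℝ (⊤ : ℕ∞) H)
    (Q : (Fin d → ℝ) → Matrix (Fin d) (Fin d) ℝ)
    (hQ : ∀ i j, ContDiff ℝ (⊤ : ℕ∞) (fun z => Q z i j))
    (hQskew : ∀ z, (Q z)ᵀ = -Q z)
    (v : (Fin d → ℝ) → Fin d → ℝ)
    (hv : ∀ z i, v z i =
      -∑ j, Q z i j * pd j H z + ∑ j, pd j (fun w => Q w i j) z)
    (z : Fin d → ℝ) :
    ∑ i, pd i (fun w => Real.exp (-H w) * v w i) z = 0 := by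
  have hF : ∀ i j, ContDiff ℝ (⊤ : ℕ∞) (fun w => Real.exp (-H w) * Q w i j) :=
    fun i j => (hH.neg.exp).mul (hQ i j)
  have hdH : Differentiable ℝ H := hH.differentiable (by simp)
  have hdQ : ∀ i j, Differentiable ℝ (fun w => Q w i j) :=
    fun i j => (hQ i j).differentiable (by simp)
  have hprod : ∀ i j w, pd j (fun w => Real.exp (-H w) * Q w i j) w
      = Real.exp (-H w) * (-(Q w i j * pd j H w) + pd j (fun w => Q w i j) w) := by
    intro i j w
    unfold pd
    have h := (((hdH w).hasFDerivAt.neg).exp).mul (hdQ i j w).hasFDerivAt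
    have h2 := h.fderiv
    have h3 : fderiv ℝ (fun w => Real.exp (-H w) * Q w i j) w = _ := h2
    rw [h3]
    simp
    ring
  have hve : ∀ i, (fun w => Real.exp (-H w) * v w i)
      = fun w => ∑ j, pd j (fun w => Real.exp (-H w) * Q w i j) w := by
    intro i
    funext w
    simp only [hprod, hv, ← Finset.mul_sum, Finset.sum_add_distrib, Finset.sum_neg_distrib]
  have hdp : ∀ i j, DifferentiableAt ℝ
      (fun w => pd j (fun w => Real.exp (-H w) * Q w i j) w) z := by
    intro i j
    unfold pd
    exact (((hF i j).fderiv_right (m := 1) (by norm_cast)).differentiable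
      (by norm_num) z).clm_apply (differentiableAt_const _)
  have hsum : ∀ i, pd i (fun w => Real.exp (-H w) * v w i) z
      = ∑ j, pd i (fun w => pd j (fun w => Real.exp (-H w) * Q w i j) w) z := by
    intro i
    rw [hve i]
    have h := fderiv_fun_sum (u := Finset.univ) (fun j _ => hdp i j)
    rw [pd, h]
    simp [pd]
  have hanti : ∀ i j, (fun w => Real.exp (-H w) * Q w i j)
      = fun w => -(Real.exp (-H w) * Q w j i) := by
    intro i j
    funext w
    have h := congrFun (congrFun (hQskew w) j) i
    simp only [Matrix.transpose_apply, Matrix.neg_apply] at h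
    rw [h]
    ring
  have hneg : ∀ (a : Fin d) (f : (Fin d → ℝ) → ℝ) (w : Fin d → ℝ),
      pd a (fun w => -f w) w = -pd a f w := by
    intro a f w
    simp [pd]
  have hT : ∀ i j, pd i (fun w => pd j (fun w => Real.exp (-H w) * Q w i j) w) z
      = -pd j (fun w => pd i (fun w => Real.exp (-H w) * Q w j i) w) z := by
    intro i j
    rw [pd_comm_aux _ (hF i j), hanti i j]
    simp only [hneg]
  simp only [hsum]
  have hS : ∑ i, ∑ j, pd i (fun w => pd j (fun w => Real.exp (-H w) * Q w i j) w) z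
      = -∑ i, ∑ j, pd i (fun w => pd j (fun w => Real.exp (-H w) * Q w i j) w) z := by
    conv_lhs => rw [Finset.sum_comm]
    simp only [← Finset.sum_neg_distrib]
    exact Finset.sum_congr rfl fun i _ => Finset.sum_congr rfl fun j _ => hT j i
  linarith
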